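/- Let (A, C, ψ) be a right-right entwining structure over a commutative ring k and g ∈ C a grouplike element. If (A, C, ψ, g) is cleft (i.e. there exists a convolution-invertible λ ∈ Q), then there exists q ∈ Q with q(g) = 1_A (equivalently, the Morita map τ of the associated Morita context is surjective). -/

import Mathlib

open TensorProduct CoalgebraStruct

universe u

section Entwining

variable (k A C : Type u) [CommRing k] [Ring A] [Algebra k A]
  [AddCommGroup C] [Module k C] [Coalgebra k C]

/-- The map `A ⊗ C → A ⊗ C`, `a ⊗ c ↦ Σ a · b_ψ ⊗ c^ψ` (entwine with `b` and multiply). -/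
noncomputable def entwineRight (ψ : C ⊗[k] A →ₗ[k] A ⊗[k] C) (b : A) :
    A ⊗[k] C →ₗ[k] A ⊗[k] C :=
  LinearMap.rTensor C (LinearMap.mul' k A) ∘ₗ
    (TensorProduct.assoc k A A C).symm.toLinearMap ∘ₗ
    LinearMap.lTensor A (ψ ∘ₗ (TensorProduct.mk k C A).flip b)

/-- The map `(C ⊗ C) ⊗ A → A ⊗ (C ⊗ C)`,
`c ⊗ c' ⊗ a ↦ Σ a_{ψΨ} ⊗ c^Ψ ⊗ c'^ψ`. -/
noncomputable def entwineTwice (ψ : C ⊗[k] A →ₗ[k] A ⊗[k] C) :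
    (C ⊗[k] C) ⊗[k] A →ₗ[k] A ⊗[k] (C ⊗[k] C) :=
  (TensorProduct.assoc k A C C).toLinearMap ∘ₗ
    LinearMap.rTensor C ψ ∘ₗ
    (TensorProduct.assoc k C A C).symm.toLinearMap ∘ₗ
    LinearMap.lTensor C ψ ∘ₗ
    (TensorProduct.assoc k C C A).toLinearMap

/-- `(A, C, ψ)` is a right-right entwining structure. -/
noncomputable def IsEntwining (ψ : C ⊗[k] A →ₗ[k] A ⊗[k] C) : Prop :=
  (∀ (c : C) (a b : A), ψ (c ⊗ₜ[k] (a * b)) = entwineRight k A C ψ b (ψ (c ⊗ₜ[k] a))) ∧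
  (∀ c : C, ψ (c ⊗ₜ[k] (1 : A)) = (1 : A) ⊗ₜ[k] c) ∧
  (∀ (c : C) (a : A),
      LinearMap.lTensor A (comul (R := k)) (ψ (c ⊗ₜ[k] a)) =
        entwineTwice k A C ψ ((comul c) ⊗ₜ[k] a)) ∧
  (∀ (c : C) (a : A),
      TensorProduct.rid k A (LinearMap.lTensor A (counit (R := k)) (ψ (c ⊗ₜ[k] a))) =
        (counit (R := k) c) • a)

/-- `g ∈ C` is a grouplike element. -/
def IsGrouplikeElem (g : C) : Prop := comul g = g ⊗ₜ[k] g ∧ counit (R := k) g = 1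

/-- Membership in `Q`: `ψ(c_1 ⊗ q(c_2)) = q(c) ⊗ g` for all `c`. -/
def MemQ (ψ : C ⊗[k] A →ₗ[k] A ⊗[k] C) (g : C) (q : C →ₗ[k] A) : Prop :=
  ∀ c : C, ψ (LinearMap.lTensor C q (comul c)) = q c ⊗ₜ[k] g

/-- The convolution product on `Hom_k(C, A)`. -/
noncomputable def conv (f h : C →ₗ[k] A) : C →ₗ[k] A :=
  LinearMap.mul' k A ∘ₗ TensorProduct.map f h ∘ₗ comul

/-- The unit of the convolution algebra: `c ↦ ε(c) 1`. -/
noncomputable def convUnit : C →ₗ[k] A :=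
  Algebra.linearMap k A ∘ₗ counit

end Entwining

/-!
The coinvariants of `A` are closed under inverses, and `Q` is stable under right multiplication by
them. If `λ ∈ Q`, then `λ(g)` is coinvariant, because `g` is grouplike, and it is a unit as soon as
`λ` is convolution-invertible. Hence `q = λ(-) λ(g)⁻¹` lies in `Q`, and `q(g) = 1`.
-/

/-- An element `a ∈ A` is coinvariant with respect to `g ∈ C` if `a_ψ ⊗ g^ψ = a ⊗ g`. When `g` is
grouplike and `ψ` is entwining, these are the coinvariants of the coaction `a ↦ ψ(g ⊗ a)` on `A`. -/
def IsCoinvariant {k A C : Type*} [CommSemiring k] [AddCommMonoid A] [Module k A]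
    [AddCommMonoid C] [Module k C] (ψ : C ⊗[k] A →ₗ[k] A ⊗[k] C) (g : C) (a : A) : Prop :=
  ψ (g ⊗ₜ[k] a) = a ⊗ₜ[k] g

section SemiEntwining

variable {k A C : Type u} [CommRing k] [Ring A] [Algebra k A]
  [AddCommGroup C] [Module k C]
  {ψ : C ⊗[k] A →ₗ[k] A ⊗[k] C} {g : C}

/-- `(A, C, ψ)` is a semi-entwining structure: `ψ` is compatible with the multiplication and the
unit of `A`, and `C` is only a module. -/
structure IsSemiEntwining (ψ : C ⊗[k] A →ₗ[k] A ⊗[k] C) : Prop where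
  map_tmul_mul (c : C) (a b : A) :
    ψ (c ⊗ₜ[k] (a * b)) = entwineRight k A C ψ b (ψ (c ⊗ₜ[k] a))
  map_tmul_one (c : C) : ψ (c ⊗ₜ[k] (1 : A)) = (1 : A) ⊗ₜ[k] c

theorem entwineRight_tmul (ψ : C ⊗[k] A →ₗ[k] A ⊗[k] C) (a b : A) (c : C) :
    entwineRight k A C ψ b (a ⊗ₜ[k] c) =
      (LinearMap.mulLeft k a).rTensor C (ψ (c ⊗ₜ[k] b)) := by
  have comp_mk_eq : (LinearMap.mul' k A).rTensor C ∘ₗ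
      (TensorProduct.assoc k A A C).symm.toLinearMap ∘ₗ TensorProduct.mk k A (A ⊗[k] C) a =
        (LinearMap.mulLeft k a).rTensor C :=
    TensorProduct.ext' fun x y ↦ by simp
  exact LinearMap.congr_fun comp_mk_eq (ψ (c ⊗ₜ[k] b))

theorem entwineRight_tmul_of_isCoinvariant {b : A} (hb : IsCoinvariant ψ g b) (a : A) :
    entwineRight k A C ψ b (a ⊗ₜ[k] g) = (a * b) ⊗ₜ[k] g := by
  rw [entwineRight_tmul, hb, LinearMap.rTensor_tmul, LinearMap.mulLeft_apply]

theorem IsSemiEntwining.map_lTensor_mulRight (hψ : IsSemiEntwining ψ) (b : A) (t : C ⊗[k] A) :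
    ψ ((LinearMap.mulRight k b).lTensor C t) = entwineRight k A C ψ b (ψ t) := by
  have comp_eq : ψ ∘ₗ (LinearMap.mulRight k b).lTensor C = entwineRight k A C ψ b ∘ₗ ψ :=
    TensorProduct.ext' fun c a ↦ hψ.map_tmul_mul c a b
  exact LinearMap.congr_fun comp_eq t

theorem IsCoinvariant.units_inv (hψ : IsSemiEntwining ψ) {u : Aˣ}
    (hu : IsCoinvariant ψ g (u : A)) : IsCoinvariant ψ g (↑u⁻¹ : A) := by
  have mul_left_eq : (LinearMap.mulLeft k (u : A)).rTensor C (ψ (g ⊗ₜ[k] (↑u⁻¹ : A))) =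
      1 ⊗ₜ[k] g := by
    rw [← entwineRight_tmul, ← hu, ← hψ.map_tmul_mul, u.mul_inv, hψ.map_tmul_one]
  calc ψ (g ⊗ₜ[k] (↑u⁻¹ : A))
      = (LinearMap.mulLeft k (↑u⁻¹ : A)).rTensor C
          ((LinearMap.mulLeft k (u : A)).rTensor C (ψ (g ⊗ₜ[k] (↑u⁻¹ : A)))) := by
        rw [← LinearMap.rTensor_comp_apply, ← LinearMap.mulLeft_mul, u.inv_mul,
          LinearMap.mulLeft_one, LinearMap.rTensor_id_apply]
    _ = (↑u⁻¹ : A) ⊗ₜ[k] g := by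
        rw [mul_left_eq, LinearMap.rTensor_tmul, LinearMap.mulLeft_apply, mul_one]

variable [Coalgebra k C]

theorem IsEntwining.isSemiEntwining (hψ : IsEntwining k A C ψ) : IsSemiEntwining ψ :=
  ⟨hψ.1, hψ.2.1⟩

theorem MemQ.mulRight_comp (hψ : IsSemiEntwining ψ) {q : C →ₗ[k] A} (hq : MemQ k A C ψ g q)
    {b : A} (hb : IsCoinvariant ψ g b) : MemQ k A C ψ g (LinearMap.mulRight k b ∘ₗ q) := by
  intro c
  rw [LinearMap.lTensor_comp_apply, hψ.map_lTensor_mulRight, hq c,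
    entwineRight_tmul_of_isCoinvariant hb, LinearMap.comp_apply, LinearMap.mulRight_apply]

theorem MemQ.isCoinvariant_apply {q : C →ₗ[k] A} (hq : MemQ k A C ψ g q)
    (hg : comul g = g ⊗ₜ[k] g) : IsCoinvariant ψ g (q g) := by
  simpa only [IsCoinvariant, hg, LinearMap.lTensor_tmul] using hq g

theorem conv_apply_of_comul_eq (f h : C →ₗ[k] A) (hg : comul g = g ⊗ₜ[k] g) :
    conv k A C f h g = f g * h g := by
  simp only [conv, LinearMap.comp_apply, hg, TensorProduct.map_tmul, LinearMap.mul'_apply]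

theorem convUnit_apply_of_counit_eq (hg : counit (R := k) g = 1) : convUnit k A C g = 1 := by
  simp only [convUnit, LinearMap.comp_apply, hg, Algebra.linearMap_apply, map_one]

theorem IsGrouplikeElem.isUnit_apply (hg : IsGrouplikeElem k C g) {f h : C →ₗ[k] A}
    (hfh : conv k A C f h = convUnit k A C) (hhf : conv k A C h f = convUnit k A C) :
    IsUnit (f g) := by
  refine isUnit_iff_exists.mpr ⟨h g, ?_, ?_⟩
  · rw [← conv_apply_of_comul_eq f h hg.1, hfh, convUnit_apply_of_counit_eq hg.2]
  · rw [← conv_apply_of_comul_eq h f hg.1, hhf, convUnit_apply_of_counit_eq hg.2]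

theorem exists_normalized_of_cleft_general (hψ : IsSemiEntwining ψ) (hg : comul g = g ⊗ₜ[k] g)
    {lam : C →ₗ[k] A} (hlam : MemQ k A C ψ g lam) (hunit : IsUnit (lam g)) :
    ∃ q : C →ₗ[k] A, MemQ k A C ψ g q ∧ q g = 1 := by
  obtain ⟨u, hu⟩ := hunit
  have u_coinvariant : IsCoinvariant ψ g (u : A) := hu ▸ hlam.isCoinvariant_apply hg
  refine ⟨LinearMap.mulRight k (↑u⁻¹ : A) ∘ₗ lam,
    hlam.mulRight_comp hψ (u_coinvariant.units_inv hψ), ?_⟩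
  rw [LinearMap.comp_apply, LinearMap.mulRight_apply, ← hu, u.mul_inv]

end SemiEntwining

/-- If `(A, C, ψ, g)` is cleft (there is a convolution-invertible `λ ∈ Q`), then there
exists `q ∈ Q` with `q(g) = 1`. -/
theorem exists_normalized_of_cleft
    (k A C : Type u) [CommRing k] [Ring A] [Algebra k A]
    [AddCommGroup C] [Module k C] [Coalgebra k C]
    (ψ : C ⊗[k] A →ₗ[k] A ⊗[k] C) (hψ : IsEntwining k A C ψ)
    (g : C) (hg : IsGrouplikeElem k C g)
    (hcleft : ∃ lam lamInv : C →ₗ[k] A, MemQ k A C ψ g lam ∧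
      conv k A C lam lamInv = convUnit k A C ∧
      conv k A C lamInv lam = convUnit k A C) :
    ∃ q : C →ₗ[k] A, MemQ k A C ψ g q ∧ q g = 1 := by
  obtain ⟨lam, lamInv, hlam, hright, hleft⟩ := hcleft
  exact exists_normalized_of_cleft_general hψ.isSemiEntwining hg.1 hlam
    (hg.isUnit_apply hright hleft)
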